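/- Let d ≥ 2 and λ ∈ [0,1), and let V(x) = F(T x) − F(x*) for x ∈ H₊. Then there exists a function τ : H₊ → [0,∞) with τ(x) > 0 for every x ∈ H₊ \ {x*} and B[x, τ(x)] ⊆ H₊ for all x ∈ H₊, such that for every compact set K ⊆ H₊: lim_{n→∞} sup V(φ(n)) = 0, where the supremum is over all x ∈ K and all τ-perturbed solutions φ : ℕ → H₊ with φ(0) = x (i.e., for each m, φ(m+1) ∈ B[T y, τ(T y)] for some y ∈ B[φ(m), τ(φ(m))]). Explicitly: for every ε > 0 there exists N such that V(φ(n)) ≤ ε for all n ≥ N and all such φ. -/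

import Mathlib

noncomputable section

open Metric Set Filter

/-- Euclidean space `ℝ^d` with `d = d' + 2 ≥ 2`. -/
abbrev Euc (d : ℕ) := EuclideanSpace ℝ (Fin (d + 2))

/-- The standard basis vectors. -/
def e (d : ℕ) (j : Fin (d + 2)) : Euc d := EuclideanSpace.single j 1

/-- The Douglas–Rachford operator for the unit sphere and the line
`L_λ = {t e₁ + λ e₂}`, given by its explicit formula
`T x = (x₁/‖x‖) e₁ + ((1 − 1/‖x‖) x₂ + λ) e₂ + (1 − 1/‖x‖) ∑_{j=3}^d x_j e_j`. -/
def DR (d : ℕ) (lam : ℝ) (x : Euc d) : Euc d :=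
  (x 0 / ‖x‖) • e d 0 + ((1 - 1 / ‖x‖) * x 1 + lam) • e d 1 +
    ∑ j ∈ Finset.univ.filter (fun j : Fin (d + 2) => 2 ≤ (j : ℕ)),
      ((1 - 1 / ‖x‖) * x j) • e d j

/-- The intersection point `x* = √(1−λ²) e₁ + λ e₂`. -/
def xStar (d : ℕ) (lam : ℝ) : Euc d := Real.sqrt (1 - lam ^ 2) • e d 0 + lam • e d 1

/-- The Lyapunov-type function of Benoist:
`F(x) = ½‖x − λe₂‖² − λ log(1 + √(1 − x₁²)) + λ√(1 − x₁²) + (λ−1) log x₁`. -/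
def F (d : ℕ) (lam : ℝ) (x : Euc d) : ℝ :=
  (1 / 2) * ‖x - lam • e d 1‖ ^ 2 - lam * Real.log (1 + Real.sqrt (1 - (x 0) ^ 2)) +
    lam * Real.sqrt (1 - (x 0) ^ 2) + (lam - 1) * Real.log (x 0)

/-- `Δ = {x : 0 < x₁ ≤ 1}`. -/
def Delta (d : ℕ) : Set (Euc d) := {x | 0 < x 0 ∧ x 0 ≤ 1}

/-- `H₊ = {x : x₁ > 0}`. -/
def Hplus (d : ℕ) : Set (Euc d) := {x | 0 < x 0}

/-- `V(x) = F(T x) − F(x*)` on `H₊`. -/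
def V (d : ℕ) (lam : ℝ) (x : Euc d) : ℝ := F d lam (DR d lam x) - F d lam (xStar d lam)

/-- A `σ`-perturbed solution of the iteration `x_{n+1} = T x_n` starting at `x` is a sequence
`φ : ℕ → H₊` with `φ(0) = x` such that for every `n` there exists
`y ∈ B[φ(n), σ(φ(n))]` with `φ(n+1) ∈ B[T y, σ(T y)]`. -/
def PerturbedSol (d : ℕ) (T : Euc d → Euc d) (σ : Euc d → ℝ) (x : Euc d)
    (φ : ℕ → Euc d) : Prop :=
  φ 0 = x ∧ (∀ n : ℕ, φ n ∈ Hplus d) ∧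
    ∀ n : ℕ, ∃ y ∈ closedBall (φ n) (σ (φ n)), φ (n + 1) ∈ closedBall (T y) (σ (T y))

/-!
Benoist's function `F` is replaced by
`W x = ½‖x - λe₂‖² - ¼x₁² - ½(1 - λ²) log x₁`, which is defined on all of `H₊`, has compact sublevel
sets there, and satisfies the exact identity
`W x - W (T x) = ‖x - x₁e₁ - λ‖x‖e₂‖² / (2‖x‖) + ¼(x₁ - x₁/‖x‖)² + ½(1 - λ²)(‖x‖ - 1 - log ‖x‖)`.
So `W` decreases strictly along `T` off `x*`.

For any such `T` and `W`, the pairs `(x, y)` for which passing from `x` to `T y` realises more than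
half of the decrease `W x - W (T x)` form an open set. If `τ x` is a quarter of the distance of
`(x, x)` to its complement, the points `T yₙ` of a perturbed solution therefore realise half
of the decrease in every step, so by compactness they converge to `x*` uniformly over compact sets
of initial points. Continuity of `V` at `x*` concludes.
-/

theorem lt_of_antitone_of_sub_le {a : ℕ → ℝ} {m δ : ℝ} (ha : Antitone a)
    (hstep : ∀ k, m ≤ a k → a (k + 1) ≤ a k - δ) {n : ℕ} (hn : a 0 - n * δ < m) : a n < m := by
  by_contra! hmn
  have linear_decrease : ∀ k ≤ n, a k ≤ a 0 - k * δ := by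
    intro k
    induction k with
    | zero => simp
    | succ k ih =>
      intro hk
      have := hstep k (hmn.trans (ha (by lia)))
      have := ih (by lia)
      push_cast
      linarith
  exact (linear_decrease n le_rfl).not_gt (hn.trans_le hmn)

section Robustness

variable {X : Type*} {H : Set X} {T : X → X} {p : X} {W : X → ℝ}

/-- `W` is a proper strict Lyapunov function for the continuous self-map `T` of the open set `H`
with fixed point `p`. Properness is relative to `H`: the sublevel sets of `W` in `H` are compact. -/
structure IsProperLyapunov [TopologicalSpace X] (H : Set X) (T : X → X) (p : X) (W : X → ℝ) :
    Prop where
  isOpen : IsOpen H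
  mapsTo : MapsTo T H H
  continuousOn_map : ContinuousOn T H
  mem : p ∈ H
  map_eq : T p = p
  continuousOn : ContinuousOn W H
  map_lt : ∀ x ∈ H, x ≠ p → W (T x) < W x
  isCompact_sublevel : ∀ M, IsCompact {x | x ∈ H ∧ W x ≤ M}

/-- The pairs `(x, y)` of points of `H` such that going from `x` to `T y` instead of `T x` still
achieves more than half of the decrease `W x - W (T x)`. -/
def descentRegion (H : Set X) (T : X → X) (W : X → ℝ) : Set (X × X) :=
  {q | q ∈ H ×ˢ H ∧ W (T q.2) < (W q.1 + W (T q.1)) / 2}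

namespace IsProperLyapunov

section Topology

variable [TopologicalSpace X]

theorem map_le (h : IsProperLyapunov H T p W) {x : X} (hx : x ∈ H) : W (T x) ≤ W x := by
  by_cases hxp : x = p
  · rw [hxp, h.map_eq]
  · exact (h.map_lt x hx hxp).le

theorem continuousOn_comp (h : IsProperLyapunov H T p W) : ContinuousOn (fun x ↦ W (T x)) H :=
  h.continuousOn.comp h.continuousOn_map h.mapsTo

-- A minimiser of `W` on a sublevel set is not decreased by `T`, so it is `p`.
theorem fixedPoint_le (h : IsProperLyapunov H T p W) {x : X} (hx : x ∈ H) : W p ≤ W x := by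
  obtain ⟨z, ⟨hzH, hzx⟩, hzmin⟩ := (h.isCompact_sublevel (W x)).exists_isMinOn ⟨x, hx, le_rfl⟩
    (h.continuousOn.mono fun _ hy ↦ hy.1)
  have hzT : W z ≤ W (T z) := hzmin ⟨h.mapsTo hzH, (h.map_le hzH).trans hzx⟩
  have hzp : z = p := by
    by_contra hne
    exact (h.map_lt z hzH hne).not_ge hzT
  rwa [← hzp]

theorem fixedPoint_lt (h : IsProperLyapunov H T p W) {x : X} (hx : x ∈ H) (hxp : x ≠ p) :
    W p < W x :=
  (h.fixedPoint_le (h.mapsTo hx)).trans_lt (h.map_lt x hx hxp)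

theorem exists_le_sub_map [T2Space X] (h : IsProperLyapunov H T p W) {m : ℝ} (hm : W p < m)
    (M : ℝ) :
    ∃ β > 0, ∀ x ∈ H, m ≤ W x → W x ≤ M → β ≤ W x - W (T x) := by
  have hsub : {x | x ∈ H ∧ W x ≤ M} ⊆ H := fun _ hx ↦ hx.1
  have hS := h.isCompact_sublevel M
  have hC : IsCompact ({x | x ∈ H ∧ W x ≤ M} ∩ W ⁻¹' Ici m) := hS.of_isClosed_subset
    ((h.continuousOn.mono hsub).preimage_isClosed_of_isClosed hS.isClosed isClosed_Ici)
    inter_subset_left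
  obtain ⟨β, hβ, hβC⟩ := hC.exists_forall_le' (f := fun x ↦ W x - W (T x))
    ((h.continuousOn.sub h.continuousOn_comp).mono (inter_subset_left.trans hsub)) (a := 0)
    fun x hx ↦ sub_pos.2 (h.map_lt x hx.1.1 (by
      rintro rfl
      exact hm.not_ge hx.2))
  exact ⟨β, hβ, fun x hx hmx hxM ↦ hβC x ⟨⟨hx, hxM⟩, hmx⟩⟩

theorem isOpen_descentRegion (h : IsProperLyapunov H T p W) : IsOpen (descentRegion H T W) := by
  have hfst : MapsTo Prod.fst (H ×ˢ H) H := fun _ hq ↦ hq.1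
  have hsnd : MapsTo Prod.snd (H ×ˢ H) H := fun _ hq ↦ hq.2
  have hcont : ContinuousOn (fun q : X × X ↦ W (T q.2) - (W q.1 + W (T q.1)) / 2) (H ×ˢ H) :=
    (h.continuousOn_comp.comp continuousOn_snd hsnd).sub
      (((h.continuousOn.comp continuousOn_fst hfst).add
        (h.continuousOn_comp.comp continuousOn_fst hfst)).div_const 2)
  convert hcont.isOpen_inter_preimage (h.isOpen.prod h.isOpen) (isOpen_Iio (a := 0)) using 1
  ext q
  simp only [descentRegion, mem_ofPred_eq, mem_inter_iff, mem_preimage, mem_Iio, sub_neg]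

theorem fixedPoint_notMem_descentRegion (h : IsProperLyapunov H T p W) :
    (p, p) ∉ descentRegion H T W := by
  rintro ⟨-, hlt⟩
  rw [h.map_eq] at hlt
  linarith

end Topology

end IsProperLyapunov

section PseudoMetric

variable [PseudoMetricSpace X]

/-- A sequence `φ` is a `σ`-perturbed orbit of `T` if every step `φ n ↦ φ (n + 1)` is an application
of `T` with errors of size `σ` before and after. This is the recursion in `PerturbedSol`, in an
arbitrary metric space. -/
def IsPerturbedOrbit (T : X → X) (σ : X → ℝ) (φ : ℕ → X) : Prop :=
  ∀ n, ∃ y ∈ closedBall (φ n) (σ (φ n)), φ (n + 1) ∈ closedBall (T y) (σ (T y))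

/-- The distance of `(x, x)` to the complement of the descent region: moving one or both entries by
less than this keeps the pair in the region. For a Lyapunov function with fixed point `p` the
complement contains `(p, p)`, so `infDist` does not take its junk value there. -/
def descentRadius (H : Set X) (T : X → X) (W : X → ℝ) (x : X) : ℝ :=
  infDist (x, x) (descentRegion H T W)ᶜ

theorem descentRadius_nonneg (H : Set X) (T : X → X) (W : X → ℝ) (x : X) :
    0 ≤ descentRadius H T W x :=
  infDist_nonneg

theorem descentRadius_le_add_dist (H : Set X) (T : X → X) (W : X → ℝ) (x y : X) :
    descentRadius H T W x ≤ descentRadius H T W y + dist x y := by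
  simpa only [descentRadius, Prod.dist_eq, max_self] using
    infDist_le_infDist_add_dist (s := (descentRegion H T W)ᶜ) (x := (x, x)) (y := (y, y))

theorem mem_descentRegion_of_dist_lt {x y : X} (hxy : dist x y < descentRadius H T W x) :
    (x, y) ∈ descentRegion H T W := by
  by_contra hmem
  have hle : descentRadius H T W x ≤ dist (x, x) (x, y) := infDist_le_dist_of_mem hmem
  rw [Prod.dist_eq, dist_self, max_eq_right dist_nonneg] at hle
  exact hle.not_gt hxy

namespace IsProperLyapunov

theorem exists_sublevel_subset_ball (h : IsProperLyapunov H T p W) {η : ℝ} (hη : 0 < η) :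
    ∃ m > W p, ∀ x ∈ H, W x < m → dist x p < η := by
  have hC : IsCompact ({x | x ∈ H ∧ W x ≤ W p + 1} ∩ (ball p η)ᶜ) :=
    (h.isCompact_sublevel _).inter_right isOpen_ball.isClosed_compl
  obtain ⟨m, hm, hmC⟩ := hC.exists_forall_le' (h.continuousOn.mono fun x hx ↦ hx.1.1)
    (a := W p) fun x hx ↦ h.fixedPoint_lt hx.1.1 (by
      rintro rfl
      exact hx.2 (mem_ball_self hη))
  refine ⟨min m (W p + 1), lt_min hm (lt_add_one _), fun x hx hxm ↦ ?_⟩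
  obtain ⟨hltm, hlt⟩ := lt_min_iff.1 hxm
  by_contra hdist
  exact (hmC x ⟨⟨hx, hlt.le⟩, hdist⟩).not_gt hltm

theorem descentRadius_le_dist (h : IsProperLyapunov H T p W) (x : X) :
    descentRadius H T W x ≤ dist x p := by
  simpa only [descentRadius, Prod.dist_eq, max_self] using
    infDist_le_dist_of_mem (s := (descentRegion H T W)ᶜ) (x := (x, x))
      h.fixedPoint_notMem_descentRegion

theorem descentRadius_pos (h : IsProperLyapunov H T p W) {x : X} (hx : x ∈ H) (hxp : x ≠ p) :
    0 < descentRadius H T W x := by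
  refine (h.isOpen_descentRegion.isClosed_compl.notMem_iff_infDist_pos
    ⟨_, h.fixedPoint_notMem_descentRegion⟩).1 (not_not.2 ⟨⟨hx, hx⟩, ?_⟩)
  linarith [h.map_lt x hx hxp]

end IsProperLyapunov

end PseudoMetric

namespace IsProperLyapunov

variable [MetricSpace X]

theorem exists_forall_dist_lt_of_halfDescent (h : IsProperLyapunov H T p W) (M : ℝ) {η : ℝ}
    (hη : 0 < η) :
    ∃ N : ℕ, ∀ n ≥ N, ∀ z : ℕ → X, (∀ k, z k ∈ H) → W (z 0) ≤ M →
      (∀ k, W (z (k + 1)) ≤ (W (z k) + W (T (z k))) / 2) → dist (z n) p < η := by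
  obtain ⟨m, hm, hball⟩ := h.exists_sublevel_subset_ball hη
  obtain ⟨β, hβ, hdecrease⟩ := h.exists_le_sub_map hm M
  obtain ⟨N, hN⟩ := exists_nat_gt ((M - m) / (β / 2))
  rw [div_lt_iff₀ (half_pos hβ)] at hN
  refine ⟨N, fun n hn z hzH hz0 hz ↦ hball _ (hzH n) ?_⟩
  have hanti : Antitone fun k ↦ W (z k) :=
    antitone_nat_of_succ_le fun k ↦ by linarith [hz k, h.map_le (hzH k)]
  refine lt_of_antitone_of_sub_le (δ := β / 2) hanti (fun k hk ↦ ?_) ?_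
  · linarith [hz k, hdecrease _ (hzH k) hk ((hanti k.zero_le).trans hz0)]
  · have : (N : ℝ) * (β / 2) ≤ n * (β / 2) := by gcongr
    linarith

theorem halfDescent_of_dist_le (h : IsProperLyapunov H T p W) {x y : X} (hx : x ∈ H)
    (hxy : dist x y ≤ 3 / 4 * descentRadius H T W x) :
    y ∈ H ∧ W (T y) ≤ (W x + W (T x)) / 2 := by
  by_cases hxp : x = p
  · subst hxp
    have hrad : descentRadius H T W x ≤ 0 := (h.descentRadius_le_dist x).trans (dist_self x).le
    have hy : x = y := dist_le_zero.1 (by linarith)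
    rw [← hy, h.map_eq]
    exact ⟨hx, by linarith⟩
  · have hmem : (x, y) ∈ descentRegion H T W :=
      mem_descentRegion_of_dist_lt (by linarith [h.descentRadius_pos hx hxp])
    exact ⟨hmem.1.2, hmem.2.le⟩

theorem exists_halfDescent_of_isPerturbedOrbit (h : IsProperLyapunov H T p W) {φ : ℕ → X}
    (hφ0 : φ 0 ∈ H) (hφ : IsPerturbedOrbit T (fun x ↦ descentRadius H T W x / 4) φ) :
    ∃ z : ℕ → X, (∀ k, z k ∈ H) ∧ W (z 0) ≤ W (φ 0) ∧
      (∀ k, W (z (k + 1)) ≤ (W (z k) + W (T (z k))) / 2) ∧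
      ∀ k, dist (φ (k + 1)) (z k) ≤ descentRadius H T W (z k) / 4 := by
  choose y hy hyφ using hφ
  simp only [mem_closedBall] at hy hyφ
  have hinit : y 0 ∈ H ∧ W (T (y 0)) ≤ (W (φ 0) + W (T (φ 0))) / 2 := by
    refine h.halfDescent_of_dist_le hφ0 ?_
    linarith [dist_comm (φ 0) (y 0), hy 0, descentRadius_nonneg H T W (φ 0)]
  -- The radius is 1-Lipschitz, so the two errors add up to at most `(1 + 5/4)/4 < 3/4` of it.
  have hdist (k : ℕ) : dist (T (y k)) (y (k + 1)) ≤ 3 / 4 * descentRadius H T W (T (y k)) := by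
    linarith [dist_triangle_left (T (y k)) (y (k + 1)) (φ (k + 1)), hyφ k, hy (k + 1),
      dist_comm (φ (k + 1)) (y (k + 1)), descentRadius_nonneg H T W (T (y k)),
      descentRadius_le_add_dist H T W (φ (k + 1)) (T (y k))]
  have hmem (k : ℕ) : T (y k) ∈ H := by
    induction k with
    | zero => exact h.mapsTo hinit.1
    | succ k ih => exact h.mapsTo (h.halfDescent_of_dist_le ih (hdist k)).1
  exact ⟨fun k ↦ T (y k), hmem, by linarith [hinit.2, h.map_le hφ0],
    fun k ↦ (h.halfDescent_of_dist_le (hmem k) (hdist k)).2, hyφ⟩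

theorem exists_forall_dist_lt_of_isPerturbedOrbit (h : IsProperLyapunov H T p W) {K : Set X}
    (hKH : K ⊆ H) (hK : IsCompact K) {η : ℝ} (hη : 0 < η) :
    ∃ N : ℕ, ∀ n ≥ N, ∀ φ : ℕ → X, φ 0 ∈ K →
      IsPerturbedOrbit T (fun x ↦ descentRadius H T W x / 4) φ → dist (φ n) p < η := by
  obtain ⟨M, hM⟩ := (hK.image_of_continuousOn (h.continuousOn.mono hKH)).bddAbove
  obtain ⟨N, hN⟩ := h.exists_forall_dist_lt_of_halfDescent M (half_pos hη)
  refine ⟨N + 1, fun n hn φ hφ0 hφ ↦ ?_⟩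
  obtain ⟨z, hzH, hz0, hz, hφz⟩ := h.exists_halfDescent_of_isPerturbedOrbit (hKH hφ0) hφ
  obtain ⟨k, rfl⟩ : ∃ k, n = k + 1 := ⟨n - 1, by lia⟩
  have hzk : dist (z k) p < η / 2 :=
    hN k (by lia) z hzH (hz0.trans (hM (mem_image_of_mem W hφ0))) hz
  calc dist (φ (k + 1)) p ≤ dist (φ (k + 1)) (z k) + dist (z k) p := dist_triangle _ _ _
    _ < η := by linarith [hφz k, h.descentRadius_le_dist (z k), dist_nonneg (x := z k) (y := p)]

theorem exists_robust_radius (h : IsProperLyapunov H T p W) :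
    ∃ τ : X → ℝ, (∀ x, 0 ≤ τ x) ∧ (∀ x ∈ H, x ≠ p → 0 < τ x) ∧
      (∀ x ∈ H, closedBall x (τ x) ⊆ H) ∧
      ∀ K ⊆ H, IsCompact K → ∀ η > 0, ∃ N : ℕ, ∀ n ≥ N, ∀ φ : ℕ → X, φ 0 ∈ K →
        IsPerturbedOrbit T τ φ → dist (φ n) p < η := by
  refine ⟨fun x ↦ descentRadius H T W x / 4, fun x ↦ ?_, fun x hx hxp ↦ ?_, fun x hx y hy ↦ ?_,
    fun K hKH hK η hη ↦ h.exists_forall_dist_lt_of_isPerturbedOrbit hKH hK hη⟩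
  · linarith [descentRadius_nonneg H T W x]
  · linarith [h.descentRadius_pos hx hxp]
  · rw [mem_closedBall'] at hy
    refine (h.halfDescent_of_dist_le hx ?_).1
    linarith [descentRadius_nonneg H T W x]

end IsProperLyapunov

end Robustness

section DouglasRachford

variable {d : ℕ} {lam : ℝ} {x : Euc d}

theorem e_apply (i j : Fin (d + 2)) : e d i j = if j = i then 1 else 0 := by
  simp [e]

theorem norm_sub_smul_e_sq (x : Euc d) (a : ℝ) (j : Fin (d + 2)) :
    ‖x - a • e d j‖ ^ 2 = ‖x‖ ^ 2 - 2 * a * x j + a ^ 2 := by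
  rw [norm_sub_sq_real, inner_smul_right, norm_smul, mul_pow]
  simp [e, EuclideanSpace.inner_single_right, mul_assoc]

theorem norm_smul_e_add_smul_e_sq (a b : ℝ) :
    ‖a • e d 0 + b • e d 1‖ ^ 2 = a ^ 2 + b ^ 2 := by
  rw [norm_add_sq_real, norm_smul, norm_smul, mul_pow, mul_pow]
  simp [e, inner_smul_left, inner_smul_right, EuclideanSpace.inner_single_right]

theorem isOpen_Hplus : IsOpen (Hplus d) := isOpen_lt continuous_const (by fun_prop)

theorem ne_zero_of_mem_Hplus (hx : x ∈ Hplus d) : x ≠ 0 := by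
  rintro rfl
  exact lt_irrefl (0 : ℝ) hx

theorem norm_xStar (hlam : lam ^ 2 ≤ 1) : ‖xStar d lam‖ = 1 := by
  have hsq : ‖xStar d lam‖ ^ 2 = 1 := by
    rw [xStar, norm_smul_e_add_smul_e_sq, Real.sq_sqrt (by linarith), sub_add_cancel]
  exact (pow_eq_one_iff_of_nonneg (norm_nonneg _) two_ne_zero).1 hsq

theorem xStar_mem_Hplus (hlam : lam ^ 2 < 1) : xStar d lam ∈ Hplus d := by
  have : 0 < √(1 - lam ^ 2) := Real.sqrt_pos.2 (by linarith)
  simpa [Hplus, xStar, e_apply] using this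

theorem eq_xStar_of_mem_line (hx0 : 0 ≤ x 0) (hnorm : ‖x‖ = 1)
    (hline : x = x 0 • e d 0 + lam • e d 1) : x = xStar d lam := by
  have hsq : x 0 ^ 2 + lam ^ 2 = 1 := by
    rw [← norm_smul_e_add_smul_e_sq (d := d), ← hline, hnorm, one_pow]
  rwa [xStar, ← hsq, add_sub_cancel_right, Real.sqrt_sq hx0]

theorem DR_eq (x : Euc d) :
    DR d lam x = (1 - 1 / ‖x‖) • x - ((1 - 2 / ‖x‖) * x 0) • e d 0 + lam • e d 1 := by
  ext i
  refine Fin.cases ?_ (Fin.cases ?_ fun j ↦ ?_) i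
  · simp [DR, e_apply, Finset.sum_apply]
    ring
  · simp [DR, e_apply, Finset.sum_apply]
  · simp [DR, e_apply, Finset.sum_apply, Fin.succ_succ_ne_one]

theorem DR_apply_zero (x : Euc d) : DR d lam x 0 = x 0 / ‖x‖ := by
  simp [DR, e_apply, Finset.sum_apply]

theorem mapsTo_DR : MapsTo (DR d lam) (Hplus d) (Hplus d) := fun x hx ↦ by
  rw [Hplus, mem_ofPred_eq, DR_apply_zero]
  exact div_pos hx (norm_pos_iff.2 (ne_zero_of_mem_Hplus hx))

theorem DR_xStar (hlam : lam ^ 2 ≤ 1) : DR d lam (xStar d lam) = xStar d lam := by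
  have h0 : xStar d lam 0 = √(1 - lam ^ 2) := by simp [xStar, e_apply]
  rw [DR_eq, norm_xStar hlam, h0, xStar]
  module

theorem continuousAt_DR (hx : x ≠ 0) : ContinuousAt (DR d lam) x := by
  have hnorm : ‖x‖ ≠ 0 := norm_ne_zero_iff.2 hx
  rw [funext DR_eq]
  fun_prop

theorem norm_DR_sub_sq (hx : x ≠ 0) :
    ‖DR d lam x - lam • e d 1‖ ^ 2 = (‖x‖ - 1) ^ 2 - (1 - 2 / ‖x‖) * x 0 ^ 2 := by
  have hnorm : ‖x‖ ≠ 0 := norm_ne_zero_iff.2 hx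
  rw [DR_eq, add_sub_cancel_right, norm_sub_smul_e_sq, norm_smul, mul_pow, Real.norm_eq_abs, sq_abs,
    PiLp.smul_apply, smul_eq_mul]
  field

/-- A proper strict Lyapunov function for the Douglas–Rachford operator on `H₊`. Unlike `F` it is
smooth on all of `H₊`; the coefficients are the ones that turn its decrease along `DR` into a sum of
nonnegative terms. -/
def lyapunov (d : ℕ) (lam : ℝ) (x : Euc d) : ℝ :=
  1 / 2 * ‖x - lam • e d 1‖ ^ 2 - 1 / 4 * x 0 ^ 2 - 1 / 2 * (1 - lam ^ 2) * Real.log (x 0)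

theorem lyapunov_sub_lyapunov_DR (hx : x ∈ Hplus d) :
    lyapunov d lam x - lyapunov d lam (DR d lam x) =
      ‖x - x 0 • e d 0 - (lam * ‖x‖) • e d 1‖ ^ 2 / (2 * ‖x‖) +
        1 / 4 * (x 0 - x 0 / ‖x‖) ^ 2 +
        1 / 2 * (1 - lam ^ 2) * (‖x‖ - 1 - Real.log ‖x‖) := by
  have hne := ne_zero_of_mem_Hplus hx
  have hnorm : ‖x‖ ≠ 0 := norm_ne_zero_iff.2 hne
  have hx0 : x 0 ≠ 0 := ne_of_gt hx
  have h1 : (x - x 0 • e d 0) 1 = x 1 := by simp [e_apply]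
  rw [lyapunov, lyapunov, norm_DR_sub_sq hne, DR_apply_zero, Real.log_div hx0 hnorm,
    norm_sub_smul_e_sq, norm_sub_smul_e_sq, norm_sub_smul_e_sq, h1]
  field

theorem lyapunov_DR_lt (hlam : lam ^ 2 < 1) (hx : x ∈ Hplus d) (hne : x ≠ xStar d lam) :
    lyapunov d lam (DR d lam x) < lyapunov d lam x := by
  have hnorm : 0 < ‖x‖ := norm_pos_iff.2 (ne_zero_of_mem_Hplus hx)
  rw [← sub_pos, lyapunov_sub_lyapunov_DR hx]
  by_cases hone : ‖x‖ = 1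
  · have hline : x - x 0 • e d 0 - lam • e d 1 ≠ 0 := fun hzero ↦
      hne (eq_xStar_of_mem_line (le_of_lt hx) hone (by rwa [sub_sub, sub_eq_zero] at hzero))
    have : 0 < ‖x - x 0 • e d 0 - lam • e d 1‖ := norm_pos_iff.2 hline
    simp only [hone, mul_one, div_one, sub_self, Real.log_one]
    positivity
  · have hlog : 0 < ‖x‖ - 1 - Real.log ‖x‖ := sub_pos.2 (Real.log_lt_sub_one_of_pos hnorm hone)
    have : 0 < 1 - lam ^ 2 := sub_pos.2 hlam
    positivity

theorem continuousOn_lyapunov : ContinuousOn (lyapunov d lam) (Hplus d) := by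
  have hlog : ContinuousOn (fun x : Euc d ↦ Real.log (x 0)) (Hplus d) :=
    ContinuousOn.log (by fun_prop) fun _ hx ↦ ne_of_gt hx
  unfold lyapunov
  fun_prop

theorem sq_apply_zero_le_norm_sub_sq (x : Euc d) (lam : ℝ) : x 0 ^ 2 ≤ ‖x - lam • e d 1‖ ^ 2 := by
  have hle := PiLp.norm_apply_le (x - lam • e d 1) 0
  exact sq_le_sq.2 (by simpa [e_apply] using hle)

theorem quadratic_le_lyapunov (hlam : lam ^ 2 ≤ 1) (hx : x ∈ Hplus d) :
    1 / 4 * ‖x - lam • e d 1‖ ^ 2 - 1 / 2 * ‖x - lam • e d 1‖ ≤ lyapunov d lam x := by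
  have hsq := sq_apply_zero_le_norm_sub_sq x lam
  have hle : x 0 ≤ ‖x - lam • e d 1‖ := le_of_sq_le_sq hsq (norm_nonneg _)
  have hlog : (1 - lam ^ 2) * Real.log (x 0) ≤ ‖x - lam • e d 1‖ :=
    calc (1 - lam ^ 2) * Real.log (x 0)
        ≤ (1 - lam ^ 2) * ‖x - lam • e d 1‖ :=
          mul_le_mul_of_nonneg_left ((Real.log_le_self (le_of_lt hx)).trans hle) (sub_nonneg.2 hlam)
      _ ≤ ‖x - lam • e d 1‖ := mul_le_of_le_one_left (norm_nonneg _) (by linarith [sq_nonneg lam])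
  rw [lyapunov]
  linarith

theorem norm_sub_le_of_lyapunov_le (hlam : lam ^ 2 ≤ 1) (hx : x ∈ Hplus d) {M : ℝ}
    (hM : lyapunov d lam x ≤ M) : ‖x - lam • e d 1‖ ≤ |M| + 4 := by
  have := quadratic_le_lyapunov hlam hx
  by_contra! hlt
  nlinarith [abs_nonneg M, le_abs_self M]

theorem exp_le_apply_zero_of_lyapunov_le (hlam : lam ^ 2 < 1) (hx : x ∈ Hplus d) {M : ℝ}
    (hM : lyapunov d lam x ≤ M) : Real.exp (-(2 * M / (1 - lam ^ 2))) ≤ x 0 := by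
  rw [← Real.le_log_iff_exp_le hx, neg_le, le_div_iff₀ (sub_pos.2 hlam)]
  rw [lyapunov] at hM
  linarith [sq_apply_zero_le_norm_sub_sq x lam, sq_nonneg (x 0)]

theorem isCompact_lyapunov_le (hlam : lam ^ 2 < 1) (M : ℝ) :
    IsCompact {x | x ∈ Hplus d ∧ lyapunov d lam x ≤ M} := by
  set Q : Set (Euc d) := closedBall (lam • e d 1) (|M| + 4) ∩
    {x | Real.exp (-(2 * M / (1 - lam ^ 2))) ≤ x 0}
  have hQ : IsCompact Q := (isCompact_closedBall _ _).inter_right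
    (isClosed_le continuous_const (by fun_prop))
  have hQH : Q ⊆ Hplus d := fun x hx ↦ (Real.exp_pos _).trans_le hx.2
  have heq : {x | x ∈ Hplus d ∧ lyapunov d lam x ≤ M} = Q ∩ lyapunov d lam ⁻¹' Iic M := by
    refine Subset.antisymm (fun x ⟨hx, hM⟩ ↦ ⟨⟨?_, ?_⟩, hM⟩) fun x ⟨hx, hM⟩ ↦ ⟨hQH hx, hM⟩
    · exact mem_closedBall_iff_norm.2 (norm_sub_le_of_lyapunov_le hlam.le hx hM)
    · exact exp_le_apply_zero_of_lyapunov_le hlam hx hM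
  rw [heq]
  exact hQ.of_isClosed_subset ((continuousOn_lyapunov.mono hQH).preimage_isClosed_of_isClosed
    hQ.isClosed isClosed_Iic) inter_subset_left

theorem isProperLyapunov_lyapunov (hlam : lam ^ 2 < 1) :
    IsProperLyapunov (Hplus d) (DR d lam) (xStar d lam) (lyapunov d lam) where
  isOpen := isOpen_Hplus
  mapsTo := mapsTo_DR
  continuousOn_map _ hx := (continuousAt_DR (ne_zero_of_mem_Hplus hx)).continuousWithinAt
  mem := xStar_mem_Hplus hlam
  map_eq := DR_xStar hlam.le
  continuousOn := continuousOn_lyapunov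
  map_lt _ hx hne := lyapunov_DR_lt hlam hx hne
  isCompact_sublevel := isCompact_lyapunov_le hlam

theorem continuousAt_F (hx : x 0 ≠ 0) : ContinuousAt (F d lam) x := by
  have hlog : ContinuousAt (fun y : Euc d ↦ Real.log (1 + √(1 - y 0 ^ 2))) x :=
    ContinuousAt.log (by fun_prop) (by positivity)
  unfold F
  fun_prop

theorem V_xStar (hlam : lam ^ 2 ≤ 1) : V d lam (xStar d lam) = 0 := by
  rw [V, DR_xStar hlam, sub_self]

theorem continuousAt_V (hx : x ∈ Hplus d) : ContinuousAt (V d lam) x :=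
  ((continuousAt_F (ne_of_gt (mapsTo_DR hx))).comp
    (continuousAt_DR (ne_zero_of_mem_Hplus hx))).sub continuousAt_const

end DouglasRachford

theorem stmt18_general (d : ℕ) (lam : ℝ) (hlam : |lam| < 1) :
    ∃ τ : Euc d → ℝ,
      (∀ x ∈ Hplus d, 0 ≤ τ x) ∧
      (∀ x ∈ Hplus d, x ≠ xStar d lam → 0 < τ x) ∧
      (∀ x ∈ Hplus d, closedBall x (τ x) ⊆ Hplus d) ∧
      ∀ K : Set (Euc d), K ⊆ Hplus d → IsCompact K →
        ∀ ε : ℝ, 0 < ε → ∃ N : ℕ, ∀ n ≥ N, ∀ x ∈ K,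
          ∀ φ : ℕ → Euc d, PerturbedSol d (DR d lam) τ x φ →
            V d lam (φ n) ≤ ε := by
  have hsq : lam ^ 2 < 1 := (sq_lt_one_iff_abs_lt_one lam).2 hlam
  obtain ⟨τ, hnonneg, hpos, hball, hconv⟩ :=
    (isProperLyapunov_lyapunov (d := d) hsq).exists_robust_radius
  refine ⟨τ, fun x _ ↦ hnonneg x, hpos, hball, fun K hKH hK ε hε ↦ ?_⟩
  have hsmall : ∀ᶠ y in nhds (xStar d lam), V d lam y < ε :=
    (continuousAt_V (xStar_mem_Hplus hsq)).eventually_lt_const (by rwa [V_xStar hsq.le])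
  obtain ⟨η, hη, hV⟩ := Metric.eventually_nhds_iff.1 hsmall
  obtain ⟨N, hN⟩ := hconv K hKH hK η hη
  exact ⟨N, fun n hn x hx φ ⟨hφ0, _, hφ⟩ ↦ (hV (hN n hn φ (hφ0 ▸ hx) hφ)).le⟩

/-- For `λ ∈ [0,1)` there is `τ : H₊ → [0,∞)` with `τ(x) > 0` for
`x ≠ x*` and `B[x,τ(x)] ⊆ H₊`, such that for every compact `K ⊆ H₊`,
`lim_{n→∞} sup V(φ(n)) = 0` over all `τ`-perturbed solutions `φ` starting in `K`. -/
theorem stmt18 (d : ℕ) (lam : ℝ) (h0 : 0 ≤ lam) (h1 : lam < 1) :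
    ∃ τ : Euc d → ℝ,
      (∀ x ∈ Hplus d, 0 ≤ τ x) ∧
      (∀ x ∈ Hplus d, x ≠ xStar d lam → 0 < τ x) ∧
      (∀ x ∈ Hplus d, closedBall x (τ x) ⊆ Hplus d) ∧
      ∀ K : Set (Euc d), K ⊆ Hplus d → IsCompact K →
        ∀ ε : ℝ, 0 < ε → ∃ N : ℕ, ∀ n ≥ N, ∀ x ∈ K,
          ∀ φ : ℕ → Euc d, PerturbedSol d (DR d lam) τ x φ →
            V d lam (φ n) ≤ ε :=
  stmt18_general d lam (abs_lt.2 ⟨by linarith, h1⟩)
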